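/- arXiv:2210.17278 — 9 statements merged into one kernel-verified Lean document; each statement's English description precedes it below -/
import Mathlib

section
/- Let (X,τ) be a topological space, 𝒫 a primal on X, and A, B ⊆ X. If A is open in X, then A ∩ B⋄ = A ∩ (A ∩ B)⋄, and this set is contained in (A ∩ B)⋄. -/
open Set

/-- A collection `P` of subsets of `X` is a *primal* on `X`. -/
structure IsSetPrimal {X : Type*} (P : Set (Set X)) : Prop where
  univ_not_mem : Set.univ ∉ P
  mem_of_subset : ∀ {A B : Set X}, A ∈ P → B ⊆ A → B ∈ P
  mem_or_mem_of_inter_mem : ∀ {A B : Set X}, A ∩ B ∈ P → A ∈ P ∨ B ∈ P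

/-- The primal-diamond operator: `A⋄ = {x | ∀ open U ∋ x, Aᶜ ∪ Uᶜ ∈ P}`. -/
def primalDiamond {X : Type*} [TopologicalSpace X] (P : Set (Set X)) (A : Set X) : Set X :=
  {x | ∀ U : Set X, IsOpen U → x ∈ U → Aᶜ ∪ Uᶜ ∈ P}

/-- The `Ψ` operator: `Ψ(A) = {x | ∃ open U ∋ x, (U \ A)ᶜ ∉ P}`. -/
def primalPsi {X : Type*} [TopologicalSpace X] (P : Set (Set X)) (A : Set X) : Set X :=
  {x | ∃ U : Set X, IsOpen U ∧ x ∈ U ∧ (U \ A)ᶜ ∉ P}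

/-- The topology is *suitable* for the primal `P` if `Aᶜ ∪ A⋄ ∉ P` for all `A`. -/
def SuitableForPrimal {X : Type*} [TopologicalSpace X] (P : Set (Set X)) : Prop :=
  ∀ A : Set X, Aᶜ ∪ primalDiamond P A ∉ P

theorem IsSetPrimal.isLowerSet {X : Type*} {P : Set (Set X)} (hP : IsSetPrimal P) :
    IsLowerSet P :=
  fun _ _ hBA hA => hP.mem_of_subset hA hBA

section PrimalDiamond

variable {X : Type*} [TopologicalSpace X] {P : Set (Set X)} {A B : Set X}

theorem primalDiamond_mono (hP : IsLowerSet P) : Monotone (primalDiamond P) :=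
  fun _ _ hAB _ hx U hU hxU =>
    hP (union_subset_union_left Uᶜ (compl_subset_compl.mpr hAB)) (hx U hU hxU)

theorem inter_primalDiamond_subset_primalDiamond_inter (hA : IsOpen A) :
    A ∩ primalDiamond P B ⊆ primalDiamond P (A ∩ B) := by
  rintro x ⟨hxA, hxB⟩ U hU hxU
  have compl_union_eq : (A ∩ B)ᶜ ∪ Uᶜ = Bᶜ ∪ (A ∩ U)ᶜ := by
    simp only [compl_inter, union_assoc, union_left_comm]
  rw [compl_union_eq]
  exact hxB (A ∩ U) (hA.inter hU) ⟨hxA, hxU⟩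

theorem stmt_0_general (hP : IsLowerSet P) (hA : IsOpen A) :
    A ∩ primalDiamond P B = A ∩ primalDiamond P (A ∩ B) ∧
    A ∩ primalDiamond P (A ∩ B) ⊆ primalDiamond P (A ∩ B) := by
  refine ⟨Subset.antisymm ?_ ?_, inter_subset_right⟩
  · exact subset_inter inter_subset_left (inter_primalDiamond_subset_primalDiamond_inter hA)
  · exact inter_subset_inter_right A (primalDiamond_mono hP inter_subset_right)

end PrimalDiamond

theorem stmt_0 {X : Type*} [TopologicalSpace X] (P : Set (Set X)) (hP : IsSetPrimal P)
    (A B : Set X) (hA : IsOpen A) :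
    A ∩ primalDiamond P B = A ∩ primalDiamond P (A ∩ B) ∧
    A ∩ primalDiamond P (A ∩ B) ⊆ primalDiamond P (A ∩ B) :=
  stmt_0_general hP.isLowerSet hA
end

section
/- Let (X,τ) be a topological space and 𝒫 a primal on X. If every closed subset of X other than X itself belongs to 𝒫, then U ⊆ U⋄ for every open set U of X. -/
open Set

theorem stmt_1_general {X : Type*} [TopologicalSpace X] {P : Set (Set X)}
    (h : ∀ F : Set X, IsClosed F → F ≠ univ → F ∈ P) {U : Set X} (hU : IsOpen U) :
    closure U ⊆ primalDiamond P U := by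
  intro x hx V hV hxV
  have hVU : (V ∩ U).Nonempty := mem_closure_iff.mp hx V hV hxV
  have hne : Uᶜ ∪ Vᶜ ≠ univ := by
    rwa [← compl_inter, compl_ne_univ, inter_comm]
  exact h _ (hU.isClosed_compl.union hV.isClosed_compl) hne

theorem stmt_1 {X : Type*} [TopologicalSpace X] (P : Set (Set X)) (hP : IsSetPrimal P)
    (h : ∀ F : Set X, IsClosed F → F ≠ Set.univ → F ∈ P) :
    ∀ U : Set X, IsOpen U → U ⊆ primalDiamond P U := by
  intro U hU
  exact subset_closure.trans (stmt_1_general h hU)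
end

section
/- Let (X,τ) be a topological space, 𝒫 a primal on X, and A, B ⊆ X. Then A⋄ \ B⋄ = (A \ B)⋄ \ B⋄. -/
open Set

/- The sets outside a primal `P` form a filter, and `A⋄` consists of the cluster points of the
infimum of that filter with `𝓟 A`. The cluster points of a supremum of two filters are those of
either one, so `⋄` distributes over binary unions. The difference formula then follows from
`A ∪ B = (A \ B) ∪ B`. -/

namespace IsSetPrimal

open Filter

variable {X : Type*} {P : Set (Set X)}

/-- The filter of sets that do not belong to the primal `P`, which turns membership in `P` into a
frequency statement. It is the improper filter `⊥` when `P = ∅`. -/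
def toFilter (hP : IsSetPrimal P) : Filter X where
  sets := Pᶜ
  univ_sets := hP.univ_not_mem
  sets_of_superset hA hAB hB := hA (hP.mem_of_subset hB hAB)
  inter_sets hA hB hAB := (hP.mem_or_mem_of_inter_mem hAB).elim hA hB

theorem frequently_toFilter_iff (hP : IsSetPrimal P) {p : X → Prop} :
    (∃ᶠ y in hP.toFilter, p y) ↔ {y | p y}ᶜ ∈ P :=
  not_not

variable [TopologicalSpace X]

theorem mem_primalDiamond_iff_clusterPt (hP : IsSetPrimal P) {A : Set X} {x : X} :
    x ∈ primalDiamond P A ↔ ClusterPt x (hP.toFilter ⊓ 𝓟 A) := by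
  have compl_union_compl_mem_iff (U : Set X) :
      Aᶜ ∪ Uᶜ ∈ P ↔ ∃ᶠ y in hP.toFilter ⊓ 𝓟 A, y ∈ U := by
    rw [frequently_inf_principal, frequently_toFilter_iff, ← compl_inter]
    rfl
  rw [(nhds_basis_opens x).clusterPt_iff_frequently]
  simp only [primalDiamond, mem_ofPred_eq, compl_union_compl_mem_iff, and_imp]
  exact forall_congr' fun U ↦ forall_comm

theorem primalDiamond_union (hP : IsSetPrimal P) (A B : Set X) :
    primalDiamond P (A ∪ B) = primalDiamond P A ∪ primalDiamond P B := by
  ext x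
  simp only [mem_union, hP.mem_primalDiamond_iff_clusterPt, ← sup_principal, inf_sup_left,
    clusterPt_sup]

end IsSetPrimal

theorem stmt_3 {X : Type*} [TopologicalSpace X] (P : Set (Set X)) (hP : IsSetPrimal P)
    (A B : Set X) :
    primalDiamond P A \ primalDiamond P B = primalDiamond P (A \ B) \ primalDiamond P B :=
  calc
    primalDiamond P A \ primalDiamond P B
      = primalDiamond P (A ∪ B) \ primalDiamond P B := by
        rw [hP.primalDiamond_union, union_sdiff_right]
    _ = primalDiamond P ((A \ B) ∪ B) \ primalDiamond P B := by
        rw [sdiff_union_self]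
    _ = primalDiamond P (A \ B) \ primalDiamond P B := by
        rw [hP.primalDiamond_union, union_sdiff_right]
end

section
/- Let (X,τ) be a topological space, 𝒫 a primal on X, and A, B ⊆ X with Bᶜ ∉ 𝒫. Then (A ∪ B)⋄ = A⋄ = (A \ B)⋄. -/
open Set

section

variable {X : Type*} {P : Set (Set X)}

theorem IsSetPrimal.inter_mem_iff_of_notMem (hP : IsSetPrimal P) {C D : Set X} (hD : D ∉ P) :
    C ∩ D ∈ P ↔ C ∈ P :=
  ⟨fun h => (hP.mem_or_mem_of_inter_mem h).resolve_right hD,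
    fun h => hP.mem_of_subset h inter_subset_left⟩

theorem IsSetPrimal.mem_iff_mem_of_inter_eq (hP : IsSetPrimal P) {C D E : Set X} (hD : D ∉ P)
    (h : C ∩ D = E ∩ D) : C ∈ P ↔ E ∈ P := by
  rw [← hP.inter_mem_iff_of_notMem hD, h, hP.inter_mem_iff_of_notMem hD]

theorem primalDiamond_eq_of_union_eq [TopologicalSpace X] (hP : IsSetPrimal P) {A B C : Set X}
    (hB : Bᶜ ∉ P) (h : A ∪ B = C ∪ B) : primalDiamond P A = primalDiamond P C := by
  have inter_compl_eq (U : Set X) : (Aᶜ ∪ Uᶜ) ∩ Bᶜ = (Cᶜ ∪ Uᶜ) ∩ Bᶜ := by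
    simp only [union_inter_distrib_right, ← compl_union, h]
  ext x
  exact forall₃_congr fun U _ _ => hP.mem_iff_mem_of_inter_eq hB (inter_compl_eq U)

end

theorem stmt_4 {X : Type*} [TopologicalSpace X] (P : Set (Set X)) (hP : IsSetPrimal P)
    (A B : Set X) (hB : Bᶜ ∉ P) :
    primalDiamond P (A ∪ B) = primalDiamond P A ∧
    primalDiamond P A = primalDiamond P (A \ B) := by
  constructor
  · exact primalDiamond_eq_of_union_eq hP hB (by rw [union_assoc, union_self])
  · exact primalDiamond_eq_of_union_eq hP hB sdiff_union_self.symm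
end

section
/- Let (X,τ) be a topological space, 𝒫 a primal on X, and A, B ⊆ X. Then Ψ(A ∩ B) = Ψ(A) ∩ Ψ(B). -/
/-!
The sets outside a primal form a filter `F`, and `x ∈ Ψ(A)` says exactly that `A ∈ 𝓝 x ⊓ F`.
Thus `Ψ` preserves binary intersections because membership in a filter does.
-/

open Set

open Filter Topology

namespace IsSetPrimal

variable {X : Type*} {P : Set (Set X)}

/-- The filter dual to a primal `P`: its members are the sets outside `P`. -/
def dualFilter (hP : IsSetPrimal P) : Filter X where
  sets := Pᶜ
  univ_sets := hP.univ_not_mem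
  sets_of_superset hA hAB hB := hA (hP.mem_of_subset hB hAB)
  inter_sets hA hB hAB := (hP.mem_or_mem_of_inter_mem hAB).elim hA hB

theorem mem_dualFilter (hP : IsSetPrimal P) {A : Set X} : A ∈ hP.dualFilter ↔ A ∉ P :=
  Iff.rfl

theorem mem_primalPsi_iff_mem_nhds_inf [TopologicalSpace X] (hP : IsSetPrimal P) {A : Set X}
    {x : X} : x ∈ primalPsi P A ↔ A ∈ 𝓝 x ⊓ hP.dualFilter := by
  constructor
  · rintro ⟨U, hU, hxU, hUA⟩
    have hsub : U ∩ (U \ A)ᶜ ⊆ A := fun y ⟨hyU, hy⟩ => by_contra fun hyA => hy ⟨hyU, hyA⟩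
    exact mem_inf_iff_superset.2
      ⟨U, hU.mem_nhds hxU, (U \ A)ᶜ, hP.mem_dualFilter.2 hUA, hsub⟩
  · intro hA
    obtain ⟨N, hN, S, hS, hNS⟩ := mem_inf_iff_superset.1 hA
    obtain ⟨U, hUN, hU, hxU⟩ := mem_nhds_iff.1 hN
    have hsub : S ⊆ (U \ A)ᶜ := fun y hyS ⟨hyU, hyA⟩ => hyA (hNS ⟨hUN hyU, hyS⟩)
    exact ⟨U, hU, hxU, hP.mem_dualFilter.1 (mem_of_superset hS hsub)⟩

end IsSetPrimal

theorem stmt_6 {X : Type*} [TopologicalSpace X] (P : Set (Set X)) (hP : IsSetPrimal P)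
    (A B : Set X) : primalPsi P (A ∩ B) = primalPsi P A ∩ primalPsi P B := by
  ext x
  simp only [mem_inter_iff, hP.mem_primalPsi_iff_mem_nhds_inf, inter_mem_iff]
end

section
/- Let (X,τ) be a topological space, 𝒫 a primal on X, and A ⊆ X. If Aᶜ ∉ 𝒫, then Ψ(A) = X \ X⋄. -/
open Set

section

variable {X : Type*} {P : Set (Set X)}

theorem IsSetPrimal.inter_mem_iff (hP : IsSetPrimal P) {A B : Set X} :
    A ∩ B ∈ P ↔ A ∈ P ∨ B ∈ P :=
  ⟨hP.mem_or_mem_of_inter_mem,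
    Or.rec (hP.mem_of_subset · inter_subset_left) (hP.mem_of_subset · inter_subset_right)⟩

theorem IsSetPrimal.union_mem_iff_of_compl_notMem (hP : IsSetPrimal P) {A : Set X}
    (hA : Aᶜ ∉ P) (C : Set X) : C ∪ A ∈ P ↔ C ∈ P :=
  calc
    C ∪ A ∈ P ↔ (C ∪ A) ∩ Aᶜ ∈ P := by rw [hP.inter_mem_iff, or_iff_left hA]
    _ ↔ C ∩ Aᶜ ∈ P := by rw [union_inter_distrib_right, inter_compl_self, union_empty]
    _ ↔ C ∈ P := by rw [hP.inter_mem_iff, or_iff_left hA]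

variable [TopologicalSpace X]

theorem IsSetPrimal.primalDiamond_sdiff (hP : IsSetPrimal P) {A : Set X} (hA : Aᶜ ∉ P)
    (B : Set X) : primalDiamond P (B \ A) = primalDiamond P B := by
  have compl_sdiff_union (U : Set X) : (B \ A)ᶜ ∪ Uᶜ = (Bᶜ ∪ Uᶜ) ∪ A := by
    rw [sdiff_eq, compl_inter, compl_compl, union_right_comm]
  simp only [primalDiamond, compl_sdiff_union, hP.union_mem_iff_of_compl_notMem hA]

theorem primalPsi_eq_compl_primalDiamond_compl (P : Set (Set X)) (A : Set X) :
    primalPsi P A = (primalDiamond P Aᶜ)ᶜ := by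
  have compl_sdiff (U : Set X) : (U \ A)ᶜ = Aᶜᶜ ∪ Uᶜ := by
    rw [sdiff_eq, compl_inter, union_comm]
  ext x
  simp only [primalPsi, primalDiamond, compl_sdiff, mem_ofPred_eq, mem_compl_iff, not_forall,
    exists_prop]

end

theorem stmt_8 {X : Type*} [TopologicalSpace X] (P : Set (Set X)) (hP : IsSetPrimal P)
    (A : Set X) (hA : Aᶜ ∉ P) : primalPsi P A = (primalDiamond P Set.univ)ᶜ := by
  rw [primalPsi_eq_compl_primalDiamond_compl, compl_eq_univ_sdiff A, hP.primalDiamond_sdiff hA]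
end

section
/- Let (X,τ) be a topological space, 𝒫 a primal on X, A ⊆ X, and I ⊆ X with Iᶜ ∉ 𝒫. Then Ψ(A \ I) = Ψ(A) and Ψ(A ∪ I) = Ψ(A). -/
open Set

open scoped symmDiff

namespace IsSetPrimal

variable {X : Type*} {P : Set (Set X)} {I J : Set X}

theorem compl_notMem_of_subset (hP : IsSetPrimal P) (hJ : Jᶜ ∉ P) (hIJ : I ⊆ J) : Iᶜ ∉ P :=
  fun hI => hJ (hP.mem_of_subset hI (compl_subset_compl.mpr hIJ))

theorem compl_union_notMem (hP : IsSetPrimal P) (hI : Iᶜ ∉ P) (hJ : Jᶜ ∉ P) : (I ∪ J)ᶜ ∉ P := by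
  rw [compl_union]
  exact fun h => (hP.mem_or_mem_of_inter_mem h).elim hI hJ

end IsSetPrimal

section PrimalPsi

variable {X : Type*} [TopologicalSpace X] {P : Set (Set X)} {A B : Set X}

/- The sets `I` with `Iᶜ ∉ P` form an ideal, and `x ∈ Ψ(A)` says that `A` contains a neighbourhood
of `x` up to a set of this ideal; hence `Ψ` only sees `A` modulo the ideal. -/
theorem primalPsi_subset_of_compl_sdiff_notMem (hP : IsSetPrimal P) (hAB : (A \ B)ᶜ ∉ P) :
    primalPsi P A ⊆ primalPsi P B := by
  rintro x ⟨U, hU, hxU, hUA⟩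
  have hUAB : (U \ A ∪ A \ B)ᶜ ∉ P := hP.compl_union_notMem hUA hAB
  exact ⟨U, hU, hxU, hP.compl_notMem_of_subset hUAB (sdiff_triangle U A B)⟩

theorem primalPsi_eq_of_compl_symmDiff_notMem (hP : IsSetPrimal P) (hAB : (A ∆ B)ᶜ ∉ P) :
    primalPsi P A = primalPsi P B :=
  Subset.antisymm
    (primalPsi_subset_of_compl_sdiff_notMem hP
      (hP.compl_notMem_of_subset hAB subset_union_left))
    (primalPsi_subset_of_compl_sdiff_notMem hP
      (hP.compl_notMem_of_subset hAB subset_union_right))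

end PrimalPsi

theorem stmt_10 {X : Type*} [TopologicalSpace X] (P : Set (Set X)) (hP : IsSetPrimal P)
    (A I : Set X) (hI : Iᶜ ∉ P) :
    primalPsi P (A \ I) = primalPsi P A ∧ primalPsi P (A ∪ I) = primalPsi P A := by
  have hsdiff : (A \ I) ∆ A ⊆ I := by
    rw [symmDiff_of_le sdiff_le, sdiff_sdiff_right_self]
    exact inter_subset_right
  have hunion : (A ∪ I) ∆ A ⊆ I := by
    rw [symmDiff_of_ge subset_union_left, union_sdiff_left]
    exact sdiff_subset
  exact ⟨primalPsi_eq_of_compl_symmDiff_notMem hP (hP.compl_notMem_of_subset hI hsdiff),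
    primalPsi_eq_of_compl_symmDiff_notMem hP (hP.compl_notMem_of_subset hI hunion)⟩
end

section
/- Let (X,τ) be a topological space, 𝒫 a primal on X, and A, B ⊆ X. If the complement of the symmetric difference (A \ B) ∪ (B \ A) is not in 𝒫, then Ψ(A) = Ψ(B). -/
open Set

/-!
The sets outside a primal `P` form a filter `F`, and `Ψ(A)` is the set of points `x` with
`A ∈ 𝓝 x ⊓ F`. The hypothesis says that `A` and `B` agree eventually along `F`, hence along every
smaller filter `𝓝 x ⊓ F`, so each `𝓝 x ⊓ F` contains both or neither.
-/

section

open Filter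
open scoped symmDiff Topology

variable {X : Type*} {A B : Set X}

theorem compl_symmDiff_mem_iff_eventuallyEq {l : Filter X} : (A ∆ B)ᶜ ∈ l ↔ A =ᶠ[l] B := by
  have h_agree : (A ∆ B)ᶜ = {x | x ∈ A ↔ x ∈ B} := by
    ext x
    simp only [mem_compl_iff, mem_symmDiff, mem_ofPred_eq]
    tauto
  rw [h_agree, eventuallyEq_set, Filter.Eventually]

namespace IsSetPrimal

variable {P : Set (Set X)}

/-- The filter of the sets outside a primal `P`, through which `Ψ` can be described by filters.
It is `⊥` when `P` is empty. -/
def notMemFilter (hP : IsSetPrimal P) : Filter X where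
  sets := Pᶜ
  univ_sets := hP.univ_not_mem
  sets_of_superset hA hAB hB := hA (hP.mem_of_subset hB hAB)
  inter_sets hA hB hAB := (hP.mem_or_mem_of_inter_mem hAB).elim hA hB

theorem mem_notMemFilter (hP : IsSetPrimal P) : A ∈ hP.notMemFilter ↔ A ∉ P :=
  Iff.rfl

variable [TopologicalSpace X]

theorem mem_primalPsi_iff (hP : IsSetPrimal P) {x : X} :
    x ∈ primalPsi P A ↔ A ∈ 𝓝 x ⊓ hP.notMemFilter := by
  constructor
  · rintro ⟨U, hU, hxU, hUA⟩
    have h_inter : U ∩ (U \ A)ᶜ ⊆ A := fun y hy => by_contra fun hyA => hy.2 ⟨hy.1, hyA⟩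
    exact mem_inf_iff_superset.2 ⟨U, hU.mem_nhds hxU, (U \ A)ᶜ, hP.mem_notMemFilter.2 hUA, h_inter⟩
  · intro hA
    obtain ⟨N, hN, S, hS, hNS⟩ := mem_inf_iff_superset.1 hA
    obtain ⟨U, hUN, hU, hxU⟩ := mem_nhds_iff.1 hN
    have hS_sub : S ⊆ (U \ A)ᶜ := fun y hyS hy => hy.2 (hNS ⟨hUN hy.1, hyS⟩)
    exact ⟨U, hU, hxU, hP.mem_notMemFilter.1 (mem_of_superset hS hS_sub)⟩

theorem primalPsi_congr (hP : IsSetPrimal P) (hAB : A =ᶠ[hP.notMemFilter] B) :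
    primalPsi P A = primalPsi P B := by
  ext x
  have hAB_near : A =ᶠ[𝓝 x ⊓ hP.notMemFilter] B := hAB.filter_mono inf_le_right
  rw [hP.mem_primalPsi_iff, hP.mem_primalPsi_iff]
  exact congr_sets hAB_near.mem_iff

end IsSetPrimal

end

theorem stmt_11 {X : Type*} [TopologicalSpace X] (P : Set (Set X)) (hP : IsSetPrimal P)
    (A B : Set X) (h : ((A \ B) ∪ (B \ A))ᶜ ∉ P) :
    primalPsi P A = primalPsi P B := by
  have hAB : (A \ B ∪ B \ A)ᶜ ∈ hP.notMemFilter := hP.mem_notMemFilter.2 h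
  exact hP.primalPsi_congr (compl_symmDiff_mem_iff_eventuallyEq.1 hAB)
end

section
/- Let (X,τ) be a topological space and 𝒫 a primal on X such that τ is suitable for 𝒫. Then the diamond operator is idempotent: (A⋄)⋄ = A⋄ for every A ⊆ X. -/
open Set

/-!
The complements of the sets outside a primal form an ideal of negligible sets, and `A⋄` is the set
of points none of whose neighbourhoods meets `A` in a negligible set. It is closed, and
`B⋄ ⊆ closure B`, so `(A⋄)⋄ ⊆ A⋄`. Removing a negligible set does not change the diamond, and
suitability says that `A \ A⋄` is negligible, so `A⋄ ⊆ (A⋄)⋄`.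
-/

section

variable {X : Type*} [TopologicalSpace X] {P : Set (Set X)} {A B : Set X}

theorem isClosed_primalDiamond (P : Set (Set X)) (A : Set X) : IsClosed (primalDiamond P A) := by
  refine isClosed_of_closure_subset fun x hx U hU hxU => ?_
  obtain ⟨y, hyU, hyA⟩ := mem_closure_iff.1 hx U hU hxU
  exact hyA U hU hyU

theorem primalDiamond_subset_closure (hP : univ ∉ P) (A : Set X) :
    primalDiamond P A ⊆ closure A := by
  refine fun x hx => mem_closure_iff.2 fun U hU hxU => ?_
  by_contra hdisj
  have hUA : Aᶜ ∪ Uᶜ = univ := by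
    rw [← compl_inter, inter_comm, not_nonempty_iff_eq_empty.1 hdisj, compl_empty]
  exact hP (hUA ▸ hx U hU hxU)

theorem primalDiamond_primalDiamond_subset (hP : univ ∉ P) (A : Set X) :
    primalDiamond P (primalDiamond P A) ⊆ primalDiamond P A :=
  (primalDiamond_subset_closure hP _).trans (isClosed_primalDiamond P A).closure_subset

/-- The hypothesis says that `A \ B`, the complement of `Aᶜ ∪ B`, is negligible. -/
theorem IsSetPrimal.primalDiamond_subset_primalDiamond (hP : IsSetPrimal P) (h : Aᶜ ∪ B ∉ P) :
    primalDiamond P A ⊆ primalDiamond P B := by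
  intro x hx U hU hxU
  have hsub : (Aᶜ ∪ B) ∩ (Bᶜ ∪ Uᶜ) ⊆ Aᶜ ∪ Uᶜ := by
    rintro y ⟨hyA | hyB, hyB' | hyU⟩
    exacts [Or.inl hyA, Or.inl hyA, absurd hyB hyB', Or.inr hyU]
  exact (hP.mem_or_mem_of_inter_mem (hP.mem_of_subset (hx U hU hxU) hsub)).resolve_left h

theorem stmt_17_general (hP : IsSetPrimal P) (hA : Aᶜ ∪ primalDiamond P A ∉ P) :
    primalDiamond P (primalDiamond P A) = primalDiamond P A :=
  (primalDiamond_primalDiamond_subset hP.univ_not_mem A).antisymm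
    (hP.primalDiamond_subset_primalDiamond hA)

end

theorem stmt_17 {X : Type*} [TopologicalSpace X] (P : Set (Set X)) (hP : IsSetPrimal P)
    (hs : SuitableForPrimal P) (A : Set X) :
    primalDiamond P (primalDiamond P A) = primalDiamond P A :=
  stmt_17_general hP (hs A)
end
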